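/- Let G = (V, E) be a finite simple undirected graph, let k be a positive integer, and let y assign to every unordered pair {i, j} of distinct vertices a value y_{ij} ∈ {0, 1}. Suppose that (i) for all pairwise distinct i, j, k ∈ V the triangle inequalities y_{ij} + y_{jk} − y_{ik} ≤ 1, y_{ij} − y_{jk} + y_{ik} ≤ 1 and −y_{ij} + y_{jk} + y_{ik} ≤ 1 hold; and (ii) for every vertex i ∈ V, the number of vertices j ≠ i with (i, j) ∉ E and y_{ij} = 1 is at most k − 1. Then the relation on V defined by i ∼ j ⟺ (i = j or y_{ij} = 1) is an equivalence relation, and every equivalence class of ∼ is a k-plex of G. Consequently, the integral feasible solutions of formulation Fks are exactly the k-plex partitions of G. -/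

import Mathlib

/-- `S` is a `k`-plex of `G` if every vertex of the subgraph induced by `S`
has degree at least `|S| - k` in that induced subgraph. -/
def IsKPlex {V : Type*} [DecidableEq V] (G : SimpleGraph V) [DecidableRel G.Adj]
    (k : ℕ) (S : Finset V) : Prop :=
  ∀ i ∈ S, S.card - k ≤ (S.filter (fun j => G.Adj i j)).card

/-- The relation that `y` encodes: `i` and `j` coincide or the pair `{i, j}` is selected. The
coefficients may be fractional, and a pair counts as selected only if its value is exactly `1`. -/
def SameComponent {V R : Type*} [One R] (y : V → V → R) (i j : V) : Prop :=
  i = j ∨ y i j = 1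

section SameComponent

variable {V R : Type*} [One R] {y : V → V → R}

theorem SameComponent.symm (hsymm : ∀ i j, y i j = y j i) {i j : V} (hij : SameComponent y i j) :
    SameComponent y j i :=
  hij.imp Eq.symm (hsymm j i).trans

theorem SameComponent.trans [Add R] [PartialOrder R] [AddLeftReflectLE R]
    (hle : ∀ i j, i ≠ j → y i j ≤ 1)
    (htri : ∀ i j l, i ≠ j → j ≠ l → i ≠ l → y i j + y j l ≤ 1 + y i l)
    {i j l : V} (hij : SameComponent y i j) (hjl : SameComponent y j l) :
    SameComponent y i l := by
  rcases eq_or_ne i j with rfl | hij_ne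
  · exact hjl
  rcases eq_or_ne j l with rfl | hjl_ne
  · exact hij
  rcases eq_or_ne i l with hil | hil_ne
  · exact .inl hil
  have one_add_one_le : 1 + 1 ≤ 1 + y i l := by
    simpa only [hij.resolve_left hij_ne, hjl.resolve_left hjl_ne] using
      htri i j l hij_ne hjl_ne hil_ne
  exact .inr ((hle i l hil_ne).antisymm (le_of_add_le_add_left one_add_one_le))

theorem equivalence_sameComponent [Add R] [PartialOrder R] [AddLeftReflectLE R]
    (hsymm : ∀ i j, y i j = y j i) (hle : ∀ i j, i ≠ j → y i j ≤ 1)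
    (htri : ∀ i j l, i ≠ j → j ≠ l → i ≠ l → y i j + y j l ≤ 1 + y i l) :
    Equivalence (SameComponent y) where
  refl _ := .inl rfl
  symm := SameComponent.symm hsymm
  trans := SameComponent.trans hle htri

end SameComponent

section IsKPlex

variable {V : Type*} [DecidableEq V] {G : SimpleGraph V} [DecidableRel G.Adj] {k : ℕ}
  {S : Finset V}

theorem card_filter_not_adj_eq_add_one {i : V} (hi : i ∈ S) :
    (S.filter fun j => ¬ G.Adj i j).card =
      (S.filter fun j => j ≠ i ∧ ¬ G.Adj i j).card + 1 := by
  have insert_eq : insert i (S.filter fun j => j ≠ i ∧ ¬ G.Adj i j) =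
      S.filter fun j => ¬ G.Adj i j := by
    ext j
    rcases eq_or_ne j i with rfl | hji <;> simp [*]
  rw [← insert_eq, Finset.card_insert_of_notMem (by simp)]

theorem isKPlex_iff_card_filter_ne_not_adj_lt :
    IsKPlex G k S ↔ ∀ i ∈ S, (S.filter fun j => j ≠ i ∧ ¬ G.Adj i j).card < k := by
  refine forall₂_congr fun i hi => ?_
  have card_add_card := S.card_filter_add_card_filter_not fun j => G.Adj i j
  have card_not_adj := card_filter_not_adj_eq_add_one (G := G) hi
  omega

theorem isKPlex_of_pairwise {r : V → V → Prop} (hS : (S : Set V).Pairwise r)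
    (hr : ∀ i ∈ S, {j | j ≠ i ∧ ¬ G.Adj i j ∧ r i j}.encard < k) : IsKPlex G k S := by
  refine isKPlex_iff_card_filter_ne_not_adj_lt.2 fun i hi => ?_
  have missing_subset : ((S.filter fun j => j ≠ i ∧ ¬ G.Adj i j : Finset V) : Set V) ⊆
      {j | j ≠ i ∧ ¬ G.Adj i j ∧ r i j} := by
    intro j hj
    obtain ⟨hjS, hji, hadj⟩ := Finset.mem_filter.1 hj
    exact ⟨hji, hadj, hS hi hjS hji.symm⟩
  have encard_lt := (Set.encard_le_encard missing_subset).trans_lt (hr i hi)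
  rwa [Set.encard_coe_eq_coe_finsetCard, Nat.cast_lt] at encard_lt

end IsKPlex

theorem Fks_feasible_iff_kplex_partition_general {V R : Type*} [DecidableEq V]
    [Add R] [One R] [PartialOrder R] [AddLeftReflectLE R]
    (G : SimpleGraph V) [DecidableRel G.Adj] (k : ℕ) (y : V → V → R)
    (hsymm : ∀ i j, y i j = y j i)
    (hle : ∀ i j, i ≠ j → y i j ≤ 1)
    (htri : ∀ i j l, i ≠ j → j ≠ l → i ≠ l → y i j + y j l ≤ 1 + y i l)
    (hnode : ∀ i, {j | j ≠ i ∧ ¬ G.Adj i j ∧ y i j = 1}.encard < k) :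
    Equivalence (SameComponent y) ∧
    ∀ (i : V) (S : Finset V), (∀ j ∈ S, SameComponent y i j) → IsKPlex G k S := by
  have equiv := equivalence_sameComponent hsymm hle htri
  refine ⟨equiv, fun i S hS => ?_⟩
  have pairwise_selected : (S : Set V).Pairwise fun j l => y j l = 1 := fun j hj l hl hjl =>
    (equiv.trans (equiv.symm (hS j hj)) (hS l hl)).resolve_left hjl
  exact isKPlex_of_pairwise pairwise_selected fun j _ => hnode j

/-- Integral feasible solutions of formulation Fks are exactly the `k`-plex partitions:
if a symmetric binary assignment `y` on all pairs of distinct vertices satisfies the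
triangle inequalities on all triples and, for each vertex `i`, at most `k - 1` missing
edges incident to `i` are selected, then `i ∼ j ↔ (i = j ∨ y i j = 1)` is an equivalence
relation whose classes are `k`-plexes of `G`. -/
theorem Fks_feasible_iff_kplex_partition {V : Type*} [Fintype V] [DecidableEq V]
    (G : SimpleGraph V) [DecidableRel G.Adj] (k : ℕ) (hk : 0 < k)
    (y : V → V → ℕ)
    (hsymm : ∀ i j : V, y i j = y j i)
    (hbin : ∀ i j : V, y i j = 0 ∨ y i j = 1)
    (htri₁ : ∀ i j l : V, i ≠ j → j ≠ l → i ≠ l → y i j + y j l ≤ 1 + y i l)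
    (htri₂ : ∀ i j l : V, i ≠ j → j ≠ l → i ≠ l → y i j + y i l ≤ 1 + y j l)
    (htri₃ : ∀ i j l : V, i ≠ j → j ≠ l → i ≠ l → y j l + y i l ≤ 1 + y i j)
    (hnode : ∀ i : V,
      (Finset.univ.filter (fun j => j ≠ i ∧ ¬ G.Adj i j ∧ y i j = 1)).card ≤ k - 1) :
    Equivalence (fun i j : V => i = j ∨ y i j = 1) ∧
    (∀ i : V, IsKPlex G k (Finset.univ.filter (fun j => i = j ∨ y i j = 1))) := by
  have hnode_lt (i : V) : {j | j ≠ i ∧ ¬ G.Adj i j ∧ y i j = 1}.encard < k := by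
    rw [← Finset.coe_filter_univ, Set.encard_coe_eq_coe_finsetCard, Nat.cast_lt]
    exact Nat.lt_of_le_pred hk (hnode i)
  exact (Fks_feasible_iff_kplex_partition_general G k y hsymm (by grind) htri₁ hnode_lt).imp_right
    fun isKPlex i => isKPlex i _ fun _ hj => (Finset.mem_filter.1 hj).2
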